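/- For m = 3, the generating function satisfies the formal power series identity D₃(x) · Σ_{n≥0} a_n^{(3)} x^n = N₃(x), where N₃(x) = 1 − x − x² + x³ + 4x⁴ − 4x⁶ − 3x⁷ − 3x⁸ − 5x⁹ − 3x¹⁰ + 2x¹¹ + 2x¹² and D₃(x) = 1 − 2x − x² + x³ + x⁴ + 2x⁵ + 2x⁶ + 2x⁷ − 4x⁸ − 2x⁹ + x¹⁰ − 2x¹¹ + x¹³. In particular, a_0^{(3)}, a_1^{(3)}, a_2^{(3)}, … = 1, 1, 2, 5, 14, 28, 55, 108, 214, 412, 787, 1497, 2841, 5364, 10088, …. -/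

import Mathlib

/-- `π` avoids the pattern 132: there are no indices `i < j < k` with `π i < π k < π j`. -/
def Avoids132 {n : ℕ} (π : Equiv.Perm (Fin n)) : Prop :=
  ¬ ∃ i j k : Fin n, i < j ∧ j < k ∧ π i < π k ∧ π k < π j

/-- `π` is `m`-bounded: adjacent entries differ by at most `m`. -/
def MBounded (m : ℕ) {n : ℕ} (π : Equiv.Perm (Fin n)) : Prop :=
  ∀ i : ℕ, ∀ h : i + 1 < n,
    |(((π ⟨i + 1, h⟩ : Fin n) : ℕ) : ℤ) - (((π ⟨i, by omega⟩ : Fin n) : ℕ) : ℤ)| ≤ (m : ℤ)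

/-- `a_n^{(m)}`: the number of `m`-bounded 132-avoiding permutations of length `n`. -/
noncomputable def aCount (m n : ℕ) : ℕ :=
  Nat.card {π : Equiv.Perm (Fin n) // Avoids132 π ∧ MBounded m π}

/-- The ordinary generating function `A^{(m)}(x) = Σ a_n^{(m)} x^n` over `ℚ`. -/
noncomputable def Aps (m : ℕ) : PowerSeries ℚ := PowerSeries.mk (fun n => (aCount m n : ℚ))

/-!
A 132-avoiding permutation of positive length is uniquely `(σ ⊕ 1) ⊖ τ`, where `σ` is the part to
the left of the maximum: every entry of `σ` exceeds every entry of `τ`. The steps at the maximum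
have size at most `m` exactly when `σ` ends among its `m` largest values and `τ` starts among its
`m - |σ|` largest. Counting `m`-bounded avoiders with the first entry among the `p` largest values
and the last entry among the `q` largest (`p = ⊤` or `q = ⊤` meaning no bound) therefore gives a
recursion that closes up. As `|σ| < m` whenever `τ` is nonempty, it turns into finitely many linear
equations between generating functions. For `m = 3` they are block triangular, with determinants
`1 - x² - 2x³ - x⁴ - x⁵ - x⁶` (finite `p` and `q`), `1 - x - x² - 2x⁴ + x⁶` (finite `p`, `q = ⊤`)
and `1 - x` (`p = ⊤`), and `D₃` is the product of the three.
-/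

/-- The triple `a b c` does not form the pattern 132. -/
def Not132 (a b c : ℕ) : Prop := ¬ (a < c ∧ c < b)

/-- `a` and `b` differ by at most `m`, stated without subtraction. -/
def Near (m a b : ℕ) : Prop := a ≤ b + m ∧ b ≤ a + m

/-- `l` is the one-line notation, with values `0, …, l.length - 1`, of an `m`-bounded 132-avoiding
permutation whose first entry is one of the `p` largest values and whose last entry is one of the
`q` largest values. The bound `⊤` is no restriction, and the empty word satisfies every bound. -/
structure IsBoundedAvoider (m : ℕ) (p q : ℕ∞) (l : List ℕ) : Prop where
  perm : l.Perm (List.range l.length)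
  avoids : l.Triplewise Not132
  bounded : l.IsChain (Near m)
  head : ∀ a ∈ l.head?, (l.length : ℕ∞) ≤ a + p
  last : ∀ a ∈ l.getLast?, (l.length : ℕ∞) ≤ a + q

/-- The word of `(σ ⊕ 1) ⊖ τ`: a copy of `σ` on top of the values of `τ`, then the maximum,
then `τ`. -/
def skewGlue (σ τ : List ℕ) : List ℕ :=
  σ.map (τ.length + ·) ++ (τ.length + σ.length) :: τ

section Decomposition

variable {m : ℕ} {p q : ℕ∞} {σ τ : List ℕ}

lemma lt_length_of_perm_range {l : List ℕ} (h : l.Perm (List.range l.length)) {x : ℕ}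
    (hx : x ∈ l) : x < l.length :=
  List.mem_range.1 (h.mem_iff.1 hx)

lemma length_skewGlue (σ τ : List ℕ) : (skewGlue σ τ).length = τ.length + σ.length + 1 := by
  simp only [skewGlue, List.length_append, List.length_map, List.length_cons]
  omega

lemma append_cons_perm_range_succ_iff {n : ℕ} {L R : List ℕ} :
    (L ++ n :: R).Perm (List.range (n + 1)) ↔ (L ++ R).Perm (List.range n) := by
  rw [List.range_succ, (List.perm_append_singleton n _).congr_right, List.perm_middle.congr_left,
    List.perm_cons]

lemma perm_range_of_nodup {l : List ℕ} (hl : l.Nodup) (hlt : ∀ x ∈ l, x < l.length) :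
    l.Perm (List.range l.length) :=
  (List.subperm_of_subset hl fun x hx => List.mem_range.2 (hlt x hx)).perm_of_length_le
    List.length_range.le

lemma skewGlue_perm_range_iff :
    (skewGlue σ τ).Perm (List.range (skewGlue σ τ).length) ↔
      σ.Perm (List.range σ.length) ∧ τ.Perm (List.range τ.length) := by
  have cancel_shift (hσ : σ.Perm (List.range σ.length)) :
      (σ.map (τ.length + ·) ++ τ).Perm (List.range (τ.length + σ.length)) ↔
        τ.Perm (List.range τ.length) := by
    rw [List.range_add, ((hσ.map _).append_right τ).congr_left, List.perm_append_comm.congr_left,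
      List.perm_append_right_iff]
  rw [length_skewGlue, skewGlue, append_cons_perm_range_succ_iff]
  refine ⟨fun h => ?_, fun h => (cancel_shift h.1).2 h.2⟩
  have hσ : σ.Perm (List.range σ.length) := by
    refine perm_range_of_nodup ?_ fun x hx => ?_
    · exact ((h.nodup_iff.2 List.nodup_range).of_append_left).of_map _
    · have := List.mem_range.1 (h.mem_iff.1 (List.mem_append_left τ (List.mem_map_of_mem hx)))
      omega
  exact ⟨hσ, (cancel_shift hσ).1 h⟩

lemma triplewise_not132_skewGlue_iff (hσ : ∀ x ∈ σ, x < σ.length) (hτ : ∀ x ∈ τ, x < τ.length) :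
    (skewGlue σ τ).Triplewise Not132 ↔ σ.Triplewise Not132 ∧ τ.Triplewise Not132 := by
  have hshift : (σ.map (τ.length + ·)).Triplewise Not132 ↔ σ.Triplewise Not132 := by
    simp only [List.triplewise_map, Not132, add_lt_add_iff_left]
    rfl
  have not_add_lt {k c : ℕ} (hc : c ∈ τ) : ¬ τ.length + k < c := by
    have := hτ c hc
    omega
  rw [skewGlue, List.triplewise_append, List.triplewise_cons, hshift]
  refine ⟨fun h => ⟨h.1, h.2.1.2⟩, fun h => ⟨h.1, ⟨?_, h.2⟩, ?_, ?_⟩⟩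
  · exact List.pairwise_of_forall_mem_list fun _ _ _ hc hpat => not_add_lt hc hpat.1
  · simp only [List.mem_map]
    rintro _ ⟨a, -, rfl⟩
    exact List.pairwise_cons.2 ⟨fun _ hc hpat => not_add_lt hc hpat.1,
      List.pairwise_of_forall_mem_list fun _ _ _ hc hpat => not_add_lt hc hpat.1⟩
  · simp only [List.pairwise_map, List.mem_cons]
    rintro c (rfl | hc)
    · exact List.pairwise_of_forall_mem_list fun _ _ b hb hpat =>
        (hσ b hb).asymm (Nat.add_lt_add_iff_left.1 hpat.2)
    · exact List.pairwise_of_forall_mem_list fun _ _ _ _ hpat => not_add_lt hc hpat.1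

lemma isChain_near_skewGlue_iff (hσ : ∀ x ∈ σ, x < σ.length) (hτ : ∀ x ∈ τ, x < τ.length) :
    (skewGlue σ τ).IsChain (Near m) ↔
      (σ.IsChain (Near m) ∧ ∀ x ∈ σ.getLast?, (σ.length : ℕ∞) ≤ x + m) ∧
      (τ.IsChain (Near m) ∧ ∀ y ∈ τ.head?, (τ.length : ℕ∞) ≤ y + (m - σ.length : ℕ)) := by
  have hshift : (σ.map (τ.length + ·)).IsChain (Near m) ↔ σ.IsChain (Near m) := by
    simp only [List.isChain_map, Near, add_assoc, add_le_add_iff_left]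
    rfl
  rw [skewGlue, List.isChain_append, List.isChain_cons, hshift]
  norm_cast
  have hlast : (∀ x ∈ (σ.map (τ.length + ·)).getLast?,
      ∀ y ∈ ((τ.length + σ.length) :: τ).head?, Near m x y) ↔
      ∀ x ∈ σ.getLast?, σ.length ≤ x + m := by
    simp only [List.getLast?_map, List.head?_cons, Option.mem_def, Option.some.injEq,
      forall_eq', Option.map_eq_some_iff, forall_exists_index, and_imp, forall_apply_eq_imp_iff₂]
    refine forall₂_congr fun x hx => ?_
    have := hσ x (List.mem_of_getLast? hx)
    unfold Near
    omega
  have hhead : (∀ y ∈ τ.head?, Near m (τ.length + σ.length) y) ↔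
      ∀ y ∈ τ.head?, τ.length ≤ y + (m - σ.length) := by
    refine forall₂_congr fun y hy => ?_
    have := hτ y (List.mem_of_head? hy)
    unfold Near
    omega
  rw [hlast, hhead]
  tauto

lemma head_skewGlue_iff :
    (∀ x ∈ (skewGlue σ τ).head?, ((skewGlue σ τ).length : ℕ∞) ≤ x + (p + 1)) ↔
      ∀ x ∈ σ.head?, (σ.length : ℕ∞) ≤ x + p := by
  rw [length_skewGlue]
  induction p using ENat.recTopCoe with
  | top => simp
  | coe p =>
    norm_cast
    cases σ with
    | nil => simp [skewGlue]
    | cons a σ =>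
      simp only [skewGlue, List.map_cons, List.length_cons, List.cons_append, List.head?_cons,
        Option.mem_def, Option.some.injEq, forall_eq']
      omega

lemma getLast_skewGlue_iff (hτ : ∀ x ∈ τ, x < τ.length) :
    (∀ x ∈ (skewGlue σ τ).getLast?, ((skewGlue σ τ).length : ℕ∞) ≤ x + (q + 1)) ↔
      ∀ x ∈ τ.getLast?, (τ.length : ℕ∞) ≤ x + (q - σ.length) := by
  rw [length_skewGlue]
  induction q using ENat.recTopCoe with
  | top => simp
  | coe q =>
    norm_cast
    simp only [skewGlue, List.getLast?_append_cons, List.getLast?_cons]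
    rcases hb : τ.getLast? with _ | b
    · simp [List.getLast?_eq_none_iff.1 hb]
    · have := hτ b (List.mem_of_getLast? hb)
      simp only [Option.getD_some, Option.mem_def, Option.some.injEq, forall_eq']
      omega

lemma isBoundedAvoider_skewGlue_iff :
    IsBoundedAvoider m (p + 1) (q + 1) (skewGlue σ τ) ↔
      IsBoundedAvoider m p m σ ∧ IsBoundedAvoider m (m - σ.length : ℕ) (q - σ.length) τ := by
  by_cases hperm : σ.Perm (List.range σ.length) ∧ τ.Perm (List.range τ.length)
  · obtain ⟨hσ, hτ⟩ := hperm
    have hσ_lt : ∀ x ∈ σ, x < σ.length := fun _ => lt_length_of_perm_range hσ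
    have hτ_lt : ∀ x ∈ τ, x < τ.length := fun _ => lt_length_of_perm_range hτ
    have avoids_iff := triplewise_not132_skewGlue_iff hσ_lt hτ_lt
    have bounded_iff := isChain_near_skewGlue_iff (m := m) hσ_lt hτ_lt
    have last_iff := getLast_skewGlue_iff (q := q) (σ := σ) hτ_lt
    constructor
    · rintro ⟨-, havoids, hbounded, hhead, hlast⟩
      obtain ⟨⟨hσb, hσlast⟩, hτb, hτhead⟩ := bounded_iff.1 hbounded
      exact ⟨⟨hσ, (avoids_iff.1 havoids).1, hσb, head_skewGlue_iff.1 hhead, hσlast⟩,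
        ⟨hτ, (avoids_iff.1 havoids).2, hτb, hτhead, last_iff.1 hlast⟩⟩
    · rintro ⟨hσ', hτ'⟩
      exact ⟨skewGlue_perm_range_iff.2 ⟨hσ, hτ⟩, avoids_iff.2 ⟨hσ'.avoids, hτ'.avoids⟩,
        bounded_iff.2 ⟨⟨hσ'.bounded, hσ'.last⟩, hτ'.bounded, hτ'.head⟩,
        head_skewGlue_iff.2 hσ'.head, last_iff.2 hτ'.last⟩
  · exact iff_of_false (fun h => hperm (skewGlue_perm_range_iff.1 h.perm))
      fun h => hperm ⟨h.1.perm, h.2.perm⟩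

lemma exists_skewGlue_eq {n : ℕ} {l : List ℕ} (hl : l.Perm (List.range (n + 1)))
    (h : l.Triplewise Not132) : ∃ σ τ, skewGlue σ τ = l := by
  obtain ⟨L, R, rfl⟩ := List.append_of_mem (hl.mem_iff.2 List.self_mem_range_succ)
  have hLR := append_cons_perm_range_succ_iff.1 hl
  have hnodup : (L ++ R).Nodup := hLR.nodup_iff.2 List.nodup_range
  have lt_n {x : ℕ} (hx : x ∈ L ++ R) : x < n := List.mem_range.1 (hLR.mem_iff.1 hx)
  have R_lt_L {a c : ℕ} (ha : a ∈ L) (hc : c ∈ R) : c < a := by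
    have not132 : Not132 a n c :=
      List.rel_of_pairwise_cons ((List.triplewise_append.1 h).2.2.1 a ha) hc
    have hcn := lt_n (List.mem_append_right L hc)
    have hne : a ≠ c := fun hac => hnodup.disjoint ha (hac ▸ hc)
    by_contra hca
    exact not132 ⟨by omega, hcn⟩
  have length_le {a : ℕ} (ha : a ∈ L) : R.length ≤ a := by
    simpa using ((List.subperm_of_subset hnodup.of_append_right
      fun c hc => List.mem_range.2 (R_lt_L ha hc)).length_le : _ ≤ (List.range a).length)
  refine ⟨L.map (· - R.length), R, ?_⟩
  have hn : R.length + L.length = n := by simpa [add_comm] using hLR.length_eq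
  have hL : L.map ((R.length + ·) ∘ (· - R.length)) = L :=
    (List.map_congr_left fun a ha => Nat.add_sub_cancel' (length_le ha)).trans (List.map_id L)
  simp only [skewGlue, List.map_map, List.length_map, hL, hn]

lemma skewGlue_inj {σ' τ' : List ℕ} (hσ : ∀ x ∈ σ, x < σ.length) (hτ : ∀ x ∈ τ, x < τ.length)
    (h : skewGlue σ τ = skewGlue σ' τ') : σ = σ' ∧ τ = τ' := by
  have hlen : τ.length + σ.length = τ'.length + σ'.length := by
    simpa only [length_skewGlue, Nat.add_right_cancel_iff] using congrArg List.length h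
  have max_notMem_left : τ'.length + σ'.length ∉ σ.map (τ.length + ·) := by
    simp only [← hlen, List.mem_map, Nat.add_left_cancel_iff, exists_eq_right]
    exact fun hmem => (hσ _ hmem).false
  have max_notMem_right : τ'.length + σ'.length ∉ τ := fun hmem => by
    have := hτ _ hmem
    omega
  obtain ⟨hmap, -, rfl⟩ :=
    (List.append_cons_inj_of_notMem max_notMem_left max_notMem_right).1 h
  exact ⟨(add_right_injective τ.length).list_map hmap, rfl⟩

end Decomposition

open Classical in
/-- The words of length `n` satisfying `IsBoundedAvoider m p q`; permutations are encoded as words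
so that they can be cut and glued without changing the type. -/
noncomputable def boundedAvoiders (m : ℕ) (p q : ℕ∞) (n : ℕ) : Finset (List ℕ) :=
  {l ∈ (List.range n).permutations.toFinset | IsBoundedAvoider m p q l}

/-- The number of `m`-bounded 132-avoiding permutations of length `n` whose first entry is one of
the `p` largest values and whose last entry is one of the `q` largest values. -/
noncomputable def endCount (m : ℕ) (p q : ℕ∞) (n : ℕ) : ℕ :=
  (boundedAvoiders m p q n).card

open Finset.HasAntidiagonal (antidiagonal mem_antidiagonal)

section Counting

variable {m n : ℕ} {p q : ℕ∞}

lemma mem_boundedAvoiders {l : List ℕ} :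
    l ∈ boundedAvoiders m p q n ↔ l.length = n ∧ IsBoundedAvoider m p q l := by
  simp only [boundedAvoiders, Finset.mem_filter, List.mem_toFinset, List.mem_permutations]
  refine and_congr_left fun hl => ⟨fun h => by simpa using h.length_eq, ?_⟩
  rintro rfl
  exact hl.perm

lemma endCount_zero (m : ℕ) (p q : ℕ∞) : endCount m p q 0 = 1 := by
  refine Finset.card_eq_one.2 ⟨[], ?_⟩
  ext l
  rw [mem_boundedAvoiders, Finset.mem_singleton, List.length_eq_zero_iff, and_iff_left_iff_imp]
  rintro rfl
  constructor <;> simp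

lemma endCount_zero_left (m : ℕ) (q : ℕ∞) (n : ℕ) : endCount m 0 q (n + 1) = 0 := by
  refine Finset.card_eq_zero.2 (Finset.eq_empty_of_forall_notMem fun l hl => ?_)
  obtain ⟨hlen, hl⟩ := mem_boundedAvoiders.1 hl
  obtain ⟨a, l, rfl⟩ := List.exists_cons_of_length_eq_add_one hlen
  have hhead := hl.head a rfl
  have hlt := lt_length_of_perm_range hl.perm List.mem_cons_self
  norm_cast at hhead
  omega

lemma endCount_zero_right (m : ℕ) (p : ℕ∞) (n : ℕ) : endCount m p 0 (n + 1) = 0 := by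
  refine Finset.card_eq_zero.2 (Finset.eq_empty_of_forall_notMem fun l hl => ?_)
  obtain ⟨hlen, hl⟩ := mem_boundedAvoiders.1 hl
  have hne : l ≠ [] := List.ne_nil_of_length_eq_add_one hlen
  have hlast := hl.last _ (List.getLast?_eq_some_getLast hne)
  have hlt := lt_length_of_perm_range hl.perm (List.getLast_mem hne)
  norm_cast at hlast
  omega

theorem endCount_succ (m : ℕ) (p q : ℕ∞) (n : ℕ) :
    endCount m (p + 1) (q + 1) (n + 1) = ∑ ij ∈ antidiagonal n,
      endCount m p m ij.1 * endCount m (m - ij.1 : ℕ) (q - ij.1) ij.2 := by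
  simp only [endCount, ← Finset.card_product]
  rw [← Finset.card_sigma]
  symm
  refine Finset.card_nbij (fun x => skewGlue x.2.1 x.2.2) ?_ ?_ ?_
  · rintro ⟨⟨i, j⟩, σ, τ⟩ h
    simp only [Finset.coe_sigma, Set.mem_sigma_iff, Finset.mem_coe, mem_antidiagonal,
      Finset.mem_product, mem_boundedAvoiders] at h ⊢
    obtain ⟨rfl, ⟨rfl, hσ⟩, rfl, hτ⟩ := h
    exact ⟨by rw [length_skewGlue, add_comm τ.length], isBoundedAvoider_skewGlue_iff.2 ⟨hσ, hτ⟩⟩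
  · rintro ⟨⟨i, j⟩, σ, τ⟩ h ⟨⟨i', j'⟩, σ', τ'⟩ h' heq
    simp only [Finset.coe_sigma, Set.mem_sigma_iff, Finset.mem_coe,
      Finset.mem_product, mem_boundedAvoiders] at h h'
    obtain ⟨-, ⟨rfl, hσ⟩, rfl, hτ⟩ := h
    obtain ⟨-, ⟨rfl, -⟩, rfl, -⟩ := h'
    obtain ⟨rfl, rfl⟩ := skewGlue_inj (fun x => lt_length_of_perm_range hσ.perm)
      (fun x => lt_length_of_perm_range hτ.perm) heq
    rfl
  · intro l hl
    obtain ⟨hlen, hl⟩ := mem_boundedAvoiders.1 (Finset.mem_coe.1 hl)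
    obtain ⟨σ, τ, rfl⟩ := exists_skewGlue_eq (hlen ▸ hl.perm) hl.avoids
    obtain ⟨hσ, hτ⟩ := isBoundedAvoider_skewGlue_iff.1 hl
    refine ⟨⟨(σ.length, τ.length), σ, τ⟩, ?_, rfl⟩
    rw [length_skewGlue] at hlen
    simp only [Finset.coe_sigma, Set.mem_sigma_iff, Finset.mem_coe, mem_antidiagonal,
      Finset.mem_product, mem_boundedAvoiders]
    exact ⟨by omega, ⟨trivial, hσ⟩, trivial, hτ⟩

lemma endCount_one (m : ℕ) (p q : ℕ∞) : endCount m (p + 1) (q + 1) 1 = 1 := by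
  simp [endCount_succ m p q 0, endCount_zero]

lemma endCount_two (m : ℕ) (p q : ℕ∞) : endCount m (p + 1) (q + 1) 2 =
    endCount m m q 1 + endCount m p m 1 := by
  simp [endCount_succ m p q 1, Finset.Nat.antidiagonal_succ, endCount_zero]

end Counting

section OneLineNotation

variable {m n : ℕ}

/-- The one-line notation of `π`, with values `0, …, n - 1`. -/
def oneLine (π : Equiv.Perm (Fin n)) : List ℕ := List.ofFn fun i => (π i : ℕ)

lemma oneLine_injective : Function.Injective (oneLine (n := n)) := fun _ _ h =>
  Equiv.ext fun i => Fin.ext (congrFun (List.ofFn_injective h) i)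

lemma oneLine_perm_range (π : Equiv.Perm (Fin n)) : (oneLine π).Perm (List.range n) := by
  simpa [oneLine, Function.comp_def, List.ofFn_eq_map] using π.ofFn_comp_perm (Fin.val (n := n))

lemma exists_oneLine_eq {l : List ℕ} (hl : l.Perm (List.range l.length)) :
    ∃ π : Equiv.Perm (Fin l.length), oneLine π = l := by
  let f (i : Fin l.length) : Fin l.length := ⟨l[i], lt_length_of_perm_range hl (l.getElem_mem _)⟩
  have hf : f.Injective := fun i j h =>
    Fin.ext ((hl.nodup_iff.2 List.nodup_range).getElem_inj_iff.1 (congrArg Fin.val h))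
  exact ⟨Equiv.ofBijective f (Finite.injective_iff_bijective.1 hf), List.ofFn_getElem⟩

lemma triplewise_not132_oneLine_iff (π : Equiv.Perm (Fin n)) :
    (oneLine π).Triplewise Not132 ↔ Avoids132 π := by
  simp only [List.triplewise_iff_getElem, oneLine, List.length_ofFn, List.getElem_ofFn, Not132,
    Avoids132]
  constructor
  · rintro h ⟨i, j, k, hij, hjk, hpat⟩
    exact h i j k hij hjk k.2 hpat
  · exact fun h i j k hij hjk hk hpat => h ⟨⟨i, _⟩, ⟨j, _⟩, ⟨k, hk⟩, hij, hjk, hpat⟩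

lemma isChain_near_oneLine_iff (π : Equiv.Perm (Fin n)) :
    (oneLine π).IsChain (Near m) ↔ MBounded m π := by
  simp only [List.isChain_iff_getElem, oneLine, List.length_ofFn, List.getElem_ofFn, Near, MBounded]
  refine forall₂_congr fun i h => ?_
  rw [abs_le]
  omega

lemma oneLine_mem_boundedAvoiders_iff (π : Equiv.Perm (Fin n)) :
    oneLine π ∈ boundedAvoiders m ⊤ ⊤ n ↔ Avoids132 π ∧ MBounded m π := by
  have hlen : (oneLine π).length = n := List.length_ofFn
  rw [mem_boundedAvoiders, ← triplewise_not132_oneLine_iff, ← isChain_near_oneLine_iff]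
  refine ⟨fun h => ⟨h.2.avoids, h.2.bounded⟩, fun h => ⟨hlen, ?_, h.1, h.2, ?_, ?_⟩⟩
  · exact hlen.symm ▸ oneLine_perm_range π
  all_goals simp

lemma aCount_eq_endCount (m n : ℕ) : aCount m n = endCount m ⊤ ⊤ n := by
  rw [aCount, endCount, ← Nat.card_eq_finsetCard]
  refine Nat.card_congr (Equiv.ofBijective
    (fun π => ⟨oneLine π.1, (oneLine_mem_boundedAvoiders_iff π.1).2 π.2⟩) ⟨?_, ?_⟩)
  · exact fun π ρ h => Subtype.ext (oneLine_injective (congrArg Subtype.val h))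
  · rintro ⟨l, hl⟩
    obtain ⟨rfl, hl'⟩ := mem_boundedAvoiders.1 hl
    obtain ⟨π, hπ⟩ := exists_oneLine_eq hl'.perm
    exact ⟨⟨π, (oneLine_mem_boundedAvoiders_iff π).1 (hπ.symm ▸ hl)⟩, Subtype.ext hπ⟩

end OneLineNotation

open PowerSeries

/-- The generating function `∑ endCount m p q n xⁿ`. -/
noncomputable def endSeries (m : ℕ) (p q : ℕ∞) : PowerSeries ℚ :=
  PowerSeries.mk fun n => (endCount m p q n : ℚ)

section FunctionalEquation

lemma Aps_eq_endSeries (m : ℕ) : Aps m = endSeries m ⊤ ⊤ := by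
  simp only [Aps, endSeries, aCount_eq_endCount]

lemma endSeries_zero_left (m : ℕ) (q : ℕ∞) : endSeries m 0 q = 1 := by
  ext (_ | n)
  · simp [endSeries, endCount_zero]
  · simp [endSeries, endCount_zero_left, coeff_one]

lemma endSeries_zero_right (m : ℕ) (p : ℕ∞) : endSeries m p 0 = 1 := by
  ext (_ | n)
  · simp [endSeries, endCount_zero]
  · simp [endSeries, endCount_zero_right, coeff_one]

lemma constantCoeff_endSeries (m : ℕ) (p q : ℕ∞) : constantCoeff (endSeries m p q) = 1 := by
  simp [endSeries, ← coeff_zero_eq_constantCoeff_apply, endCount_zero]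

lemma coeff_sum_C_mul_X_pow_mul {R : Type*} [CommSemiring R] {m : ℕ} (a : ℕ → R)
    {φ : ℕ → PowerSeries R} (hφ : ∀ i, m ≤ i → φ i = 0) (n : ℕ) :
    coeff n (∑ i ∈ Finset.range m, C (a i) * X ^ i * φ i) =
      ∑ ij ∈ antidiagonal n, a ij.1 * coeff ij.2 (φ ij.1) := by
  rw [Finset.Nat.sum_antidiagonal_eq_sum_range_succ fun i j => a i * coeff j (φ i)]
  simp only [map_sum, mul_assoc, coeff_C_mul, coeff_X_pow_mul', mul_ite, mul_zero,
    ← Finset.sum_filter]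
  refine Finset.sum_subset (fun i hi => ?_) fun i hi hi' => ?_
  · exact Finset.mem_range_succ_iff.2 (Finset.mem_filter.1 hi).2
  · have him : m ≤ i := by
      simp only [Finset.mem_filter, Finset.mem_range] at hi hi'
      omega
    simp only [hφ i him, map_zero, mul_zero]

theorem endSeries_succ (m : ℕ) (p q : ℕ∞) :
    endSeries m (p + 1) (q + 1) = 1 + X * (endSeries m p m +
      ∑ i ∈ Finset.range m, (endCount m p m i : PowerSeries ℚ) * X ^ i *
        (endSeries m (m - i : ℕ) (q - i) - 1)) := by
  ext (_ | n)
  · simp [constantCoeff_endSeries]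
  have vanish (i : ℕ) (hi : m ≤ i) : endSeries m (m - i : ℕ) (q - i) - 1 = 0 := by
    rw [Nat.sub_eq_zero_of_le hi, Nat.cast_zero, endSeries_zero_left, sub_self]
  have second_factor (i j : ℕ) : (endCount m (m - i : ℕ) (q - i) j : ℚ) =
      coeff j (1 : PowerSeries ℚ) + coeff j (endSeries m (m - i : ℕ) (q - i) - 1) := by
    simp only [endSeries, map_sub, coeff_mk, add_sub_cancel]
  calc coeff (n + 1) (endSeries m (p + 1) (q + 1))
      = ∑ ij ∈ antidiagonal n, (endCount m p m ij.1 : ℚ) *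
          endCount m (m - ij.1 : ℕ) (q - ij.1) ij.2 := by
        simp only [endSeries, coeff_mk, endCount_succ, Nat.cast_sum, Nat.cast_mul]
    _ = coeff n (endSeries m p m * 1) + ∑ ij ∈ antidiagonal n, (endCount m p m ij.1 : ℚ) *
          coeff ij.2 (endSeries m (m - ij.1 : ℕ) (q - ij.1) - 1) := by
        simp only [second_factor, mul_add, Finset.sum_add_distrib]
        rw [coeff_mul]
        simp only [endSeries, coeff_mk]
    _ = _ := by
        simp only [← coeff_sum_C_mul_X_pow_mul (fun i => (endCount m p m i : ℚ)) vanish,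
          map_natCast, map_add, coeff_succ_X_mul, mul_one, coeff_one, if_neg n.succ_ne_zero,
          zero_add]

end FunctionalEquation

section MEqThree

lemma endSeries_three_succ (p q : ℕ∞) : endSeries 3 (p + 1) (q + 1) =
    1 + X * (endSeries 3 p 3 + endSeries 3 3 q - 1 +
      (endCount 3 p 3 1 : PowerSeries ℚ) * X * (endSeries 3 2 (q - 1) - 1) +
      (endCount 3 p 3 2 : PowerSeries ℚ) * X ^ 2 * (endSeries 3 1 (q - 2) - 1)) := by
  have h := endSeries_succ 3 p q
  simp only [Finset.sum_range_succ, Finset.sum_range_zero, endCount_zero, Nat.reduceSub,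
    Nat.cast_ofNat, Nat.cast_zero, Nat.cast_one, tsub_zero] at h
  linear_combination h

lemma endSeries_three_one_succ (q : ℕ∞) : endSeries 3 1 (q + 1) = 1 + X * endSeries 3 3 q := by
  simpa [endCount_zero_left, endSeries_zero_left] using endSeries_three_succ 0 q

lemma endSeries_three_two_succ (q : ℕ∞) : endSeries 3 2 (q + 1) =
    1 + X * (endSeries 3 1 3 + endSeries 3 3 q - 1 + X * (endSeries 3 2 (q - 1) - 1) +
      X ^ 2 * (endSeries 3 1 (q - 2) - 1)) := by
  have count_one : endCount 3 1 3 1 = 1 := endCount_one 3 0 2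
  have count_two : endCount 3 1 3 2 = 1 := by
    rw [← zero_add 1]
    exact (endCount_two 3 0 2).trans (by rw [endCount_zero_left]; exact endCount_one 3 2 1)
  have h := endSeries_three_succ 1 q
  rw [count_one, count_two] at h
  simpa [one_add_one_eq_two] using h

lemma endSeries_three_add_three_succ (p q : ℕ∞) : endSeries 3 (p + 3) (q + 1) =
    1 + X * (endSeries 3 (p + 2) 3 + endSeries 3 3 q - 1 + X * (endSeries 3 2 (q - 1) - 1) +
      2 * X ^ 2 * (endSeries 3 1 (q - 2) - 1)) := by
  have hp : p + 2 = p + 1 + 1 := by rw [add_assoc, one_add_one_eq_two]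
  have count_one (p : ℕ∞) : endCount 3 (p + 1) 3 1 = 1 := endCount_one 3 p 2
  have count_two : endCount 3 (p + 2) 3 2 = 2 := by
    rw [hp]
    exact (endCount_two 3 (p + 1) 2).trans (congrArg₂ (· + ·) (endCount_one 3 2 1) (count_one p))
  have h := endSeries_three_succ (p + 2) q
  rw [count_two, hp, count_one, ← hp, add_assoc p 2 1] at h
  simpa [two_add_one_eq_three, map_ofNat] using h

/-- The determinant of the linear system for the three series `endSeries 3 p ⊤` with
`p = 1, 2, 3`. -/
noncomputable def topDet : PowerSeries ℚ := 1 - X - X ^ 2 - 2 * X ^ 4 + X ^ 6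

/-- The determinant of the linear system for the five series `endSeries 3 p q` with
`(p, q) = (1, 3), (2, 1), (2, 3), (3, 1), (3, 2)`. -/
noncomputable def finiteDet : PowerSeries ℚ := 1 - X ^ 2 - 2 * X ^ 3 - X ^ 4 - X ^ 5 - X ^ 6

lemma endSeries_three_one_three : endSeries 3 1 3 = 1 + X * endSeries 3 3 2 :=
  endSeries_three_one_succ 2

lemma endSeries_three_two_three : endSeries 3 2 3 =
    1 + X * (endSeries 3 1 3 + endSeries 3 3 2 - 1 + X ^ 2 * endSeries 3 1 3) := by
  have h₂₁ : endSeries 3 2 1 = 1 + X * (endSeries 3 1 3 + endSeries 3 3 0 - 1 +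
      X * (endSeries 3 2 0 - 1) + X ^ 2 * (endSeries 3 1 0 - 1)) :=
    endSeries_three_two_succ 0
  have h₂₃ : endSeries 3 2 3 = 1 + X * (endSeries 3 1 3 + endSeries 3 3 2 - 1 +
      X * (endSeries 3 2 1 - 1) + X ^ 2 * (endSeries 3 1 0 - 1)) :=
    endSeries_three_two_succ 2
  simp only [endSeries_zero_right] at h₂₁ h₂₃
  linear_combination h₂₃ + X ^ 2 * h₂₁

lemma endSeries_three_three_two : endSeries 3 3 2 = 1 + X * ((1 + X) * endSeries 3 2 3) := by
  have h₃₁ : endSeries 3 3 1 = 1 + X * (endSeries 3 2 3 + endSeries 3 3 0 - 1 +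
      X * (endSeries 3 2 0 - 1) + 2 * X ^ 2 * (endSeries 3 1 0 - 1)) :=
    endSeries_three_add_three_succ 0 0
  have h₃₂ : endSeries 3 3 2 = 1 + X * (endSeries 3 2 3 + endSeries 3 3 1 - 1 +
      X * (endSeries 3 2 0 - 1) + 2 * X ^ 2 * (endSeries 3 1 0 - 1)) :=
    endSeries_three_add_three_succ 0 1
  simp only [endSeries_zero_right] at h₃₁ h₃₂
  linear_combination h₃₂ + X * h₃₁

lemma finiteDet_mul_endSeries_three_three_two :
    finiteDet * endSeries 3 3 2 = 1 + X + X ^ 2 + X ^ 4 + X ^ 5 := by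
  rw [finiteDet]
  linear_combination endSeries_three_three_two + X * (1 + X) * endSeries_three_two_three +
    X * (1 + X) * (X + X ^ 3) * endSeries_three_one_three

lemma finiteDet_mul_endSeries_three_one_three :
    finiteDet * endSeries 3 1 3 = 1 + X - X ^ 3 - X ^ 4 := by
  have h := finiteDet_mul_endSeries_three_three_two
  rw [endSeries_three_one_three]
  rw [finiteDet] at h ⊢
  linear_combination X * h

lemma finiteDet_mul_endSeries_three_two_three :
    finiteDet * endSeries 3 2 3 = 1 + X + X ^ 2 + X ^ 3 + X ^ 4 := by
  have h₁ := finiteDet_mul_endSeries_three_one_three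
  have h₂ := finiteDet_mul_endSeries_three_three_two
  rw [endSeries_three_two_three]
  rw [finiteDet] at h₁ h₂ ⊢
  linear_combination (X + X ^ 3) * h₁ + X * h₂

lemma topDet_mul_endSeries_three_three_top : topDet * endSeries 3 3 ⊤ =
    1 - X - X ^ 2 + X ^ 3 * endSeries 3 1 3 + (X - X ^ 3) * endSeries 3 2 3 := by
  have h₁ : endSeries 3 1 ⊤ = 1 + X * endSeries 3 3 ⊤ := endSeries_three_one_succ ⊤
  have h₂ : endSeries 3 2 ⊤ = 1 + X * (endSeries 3 1 3 + endSeries 3 3 ⊤ - 1 +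
      X * (endSeries 3 2 ⊤ - 1) + X ^ 2 * (endSeries 3 1 ⊤ - 1)) :=
    endSeries_three_two_succ ⊤
  have h₃ : endSeries 3 3 ⊤ = 1 + X * (endSeries 3 2 3 + endSeries 3 3 ⊤ - 1 +
      X * (endSeries 3 2 ⊤ - 1) + 2 * X ^ 2 * (endSeries 3 1 ⊤ - 1)) :=
    endSeries_three_add_three_succ 0 ⊤
  rw [topDet]
  linear_combination (1 - X ^ 2) * h₃ + X ^ 2 * h₂ + (2 * X ^ 3 - X ^ 5) * h₁

lemma one_sub_X_mul_endSeries_three_top_top : (1 - X) * endSeries 3 ⊤ ⊤ =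
    (1 - X) * endSeries 3 3 ⊤ + X ^ 2 * (endSeries 3 2 3 - endSeries 3 1 3) := by
  have hdiff_top : endSeries 3 ⊤ ⊤ - endSeries 3 3 ⊤ =
      X * (endSeries 3 ⊤ 3 - endSeries 3 2 3) := by
    have h₁ := endSeries_three_add_three_succ 0 ⊤
    have h₂ := endSeries_three_add_three_succ ⊤ ⊤
    simp only [zero_add, top_add] at h₁ h₂
    linear_combination h₂ - h₁
  have hdiff_three : endSeries 3 ⊤ 3 - endSeries 3 2 3 =
      X * (endSeries 3 ⊤ 3 - endSeries 3 1 3) := by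
    have h₁ : endSeries 3 2 3 = 1 + X * (endSeries 3 1 3 + endSeries 3 3 2 - 1 +
        X * (endSeries 3 2 1 - 1) + X ^ 2 * (endSeries 3 1 0 - 1)) :=
      endSeries_three_two_succ 2
    have h₂ : endSeries 3 ⊤ 3 = 1 + X * (endSeries 3 ⊤ 3 + endSeries 3 3 2 - 1 +
        X * (endSeries 3 2 1 - 1) + 2 * X ^ 2 * (endSeries 3 1 0 - 1)) :=
      endSeries_three_add_three_succ ⊤ 2
    simp only [endSeries_zero_right] at h₁ h₂
    linear_combination h₂ - h₁
  linear_combination (1 - X) * hdiff_top + X * hdiff_three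

theorem det_mul_Aps_three : (1 - X) * topDet * finiteDet * Aps 3 =
    (1 - X) * ((1 - X - X ^ 2) * finiteDet + X ^ 3 * (1 + X - X ^ 3 - X ^ 4) +
      (X - X ^ 3) * (1 + X + X ^ 2 + X ^ 3 + X ^ 4)) +
    topDet * X ^ 2 * (X ^ 2 + 2 * X ^ 3 + 2 * X ^ 4) := by
  rw [Aps_eq_endSeries]
  linear_combination topDet * finiteDet * one_sub_X_mul_endSeries_three_top_top +
    (1 - X) * finiteDet * topDet_mul_endSeries_three_three_top +
    ((1 - X) * X ^ 3 - topDet * X ^ 2) * finiteDet_mul_endSeries_three_one_three +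
    ((1 - X) * (X - X ^ 3) + topDet * X ^ 2) * finiteDet_mul_endSeries_three_two_three

theorem Aps_three_mul :
    (1 - 2 * X - X ^ 2 + X ^ 3 + X ^ 4 + 2 * X ^ 5 + 2 * X ^ 6 + 2 * X ^ 7 - 4 * X ^ 8 - 2 * X ^ 9
        + X ^ 10 - 2 * X ^ 11 + X ^ 13) * Aps 3 =
      1 - X - X ^ 2 + X ^ 3 + 4 * X ^ 4 - 4 * X ^ 6 - 3 * X ^ 7 - 3 * X ^ 8 - 5 * X ^ 9
        - 3 * X ^ 10 + 2 * X ^ 11 + 2 * X ^ 12 := by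
  have h := det_mul_Aps_three
  rw [topDet, finiteDet] at h
  linear_combination h

end MEqThree

section Values

lemma coeff_eq_of_mul_eq_of_mul_sum_eq {R : Type*} [CommRing R] {D A N E : PowerSeries R}
    {a : ℕ → R} {k n : ℕ} (hD : IsUnit (constantCoeff D)) (hA : D * A = N)
    (ha : D * ∑ i ∈ Finset.range k, C (a i) * X ^ i = N + X ^ k * E) (hn : n < k) :
    coeff n A = a n := by
  have hdvd : X ^ k ∣ D * (∑ i ∈ Finset.range k, C (a i) * X ^ i - A) :=
    ⟨E, by rw [mul_sub, hA, ha, add_sub_cancel_left]⟩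
  rw [(isUnit_iff_constantCoeff.2 hD).dvd_mul_left, X_pow_dvd_iff] at hdvd
  have hcoeff : coeff n (∑ i ∈ Finset.range k, C (a i) * X ^ i) = a n := by
    simp [coeff_X_pow, hn]
  rw [← hcoeff, eq_comm, ← sub_eq_zero, ← map_sub, hdvd n hn]

/-- The numbers of `3`-bounded 132-avoiding permutations of lengths `0, …, 14`. -/
def initialCounts : List ℕ :=
  [1, 1, 2, 5, 14, 28, 55, 108, 214, 412, 787, 1497, 2841, 5364, 10088]

theorem aCount_three_eq_getD {n : ℕ} (hn : n < 15) : aCount 3 n = initialCounts.getD n 0 := by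
  have hcoeff : coeff n (Aps 3) = (initialCounts.getD n 0 : ℚ) := by
    -- `X ^ 15 * E` is the part of degree at least 15 of `D₃` times `∑ aₙ xⁿ` over `n < 15`.
    refine coeff_eq_of_mul_eq_of_mul_sum_eq (a := fun n => (initialCounts.getD n 0 : ℚ))
      (E := -18916 + 2441 * X + 23638 * X ^ 2 + 25546 * X ^ 3 + 29063 * X ^ 4 + 16617 * X ^ 5
        - 6825 * X ^ 6 - 50821 * X ^ 7 - 19707 * X ^ 8 + 857 * X ^ 9 - 17335 * X ^ 10
        + 5364 * X ^ 11 + 10088 * X ^ 12) ?_ Aps_three_mul ?_ hn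
    · simp
    · simp only [Finset.sum_range_succ, Finset.sum_range_zero, initialCounts,
        List.getD_cons_zero, List.getD_cons_succ, map_natCast, Nat.cast_ofNat, Nat.cast_one]
      ring
  rw [Aps, coeff_mk] at hcoeff
  exact_mod_cast hcoeff

end Values

theorem case_m_eq_three :
    (1 - 2 * PowerSeries.X - PowerSeries.X ^ 2 + PowerSeries.X ^ 3 + PowerSeries.X ^ 4
        + 2 * PowerSeries.X ^ 5 + 2 * PowerSeries.X ^ 6 + 2 * PowerSeries.X ^ 7
        - 4 * PowerSeries.X ^ 8 - 2 * PowerSeries.X ^ 9 + PowerSeries.X ^ 10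
        - 2 * PowerSeries.X ^ 11 + (PowerSeries.X : PowerSeries ℚ) ^ 13) * Aps 3 =
      1 - PowerSeries.X - PowerSeries.X ^ 2 + PowerSeries.X ^ 3 + 4 * PowerSeries.X ^ 4
        - 4 * PowerSeries.X ^ 6 - 3 * PowerSeries.X ^ 7 - 3 * PowerSeries.X ^ 8
        - 5 * PowerSeries.X ^ 9 - 3 * PowerSeries.X ^ 10 + 2 * PowerSeries.X ^ 11
        + 2 * PowerSeries.X ^ 12 ∧
    aCount 3 0 = 1 ∧ aCount 3 1 = 1 ∧ aCount 3 2 = 2 ∧ aCount 3 3 = 5 ∧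
    aCount 3 4 = 14 ∧ aCount 3 5 = 28 ∧ aCount 3 6 = 55 ∧ aCount 3 7 = 108 ∧
    aCount 3 8 = 214 ∧ aCount 3 9 = 412 ∧ aCount 3 10 = 787 ∧ aCount 3 11 = 1497 ∧
    aCount 3 12 = 2841 ∧ aCount 3 13 = 5364 ∧ aCount 3 14 = 10088 := by
  refine ⟨Aps_three_mul, ?_⟩
  and_intros <;> exact aCount_three_eq_getD (by decide)
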